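/- Let L be a frame and a_1, …, a_k complemented elements of L that are pairwise disjoint (a_i ⊓ a_j = ⊥ for i ≠ j). Then the iterated sum of pairs χ_{a_1} + ⋯ + χ_{a_k} equals χ_{a_1 ⊔ ⋯ ⊔ a_k} (equality of both components as functions ℚ → L). -/

import Mathlib

/-- A pair of maps `u, v : ℚ → L`, encoding a real-valued function on the frame `L`
via `f(p,—) = u p`, `f(—,q) = v q`. -/
structure MP (L : Type*) where
  u : ℚ → L
  v : ℚ → L

/-- The sum of two pairs. -/
noncomputable def MP.add {L : Type*} [Order.Frame L] (f g : MP L) : MP L where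
  u := fun p => ⨆ t : ℚ, f.u t ⊓ g.u (p - t)
  v := fun q => ⨆ t : ℚ, f.v t ⊓ g.v (q - t)

/-- The zero pair `𝟎`. -/
noncomputable def zeroMP (L : Type*) [Order.Frame L] : MP L where
  u := fun p => if p < 0 then ⊤ else ⊥
  v := fun q => if q ≤ 0 then ⊥ else ⊤

/-- The characteristic pair `χ_a` of a complemented element `a` with complement `ac`. -/
noncomputable def chiMP {L : Type*} [Order.Frame L] (a ac : L) : MP L where
  u := fun p => if p < 0 then ⊤ else if p < 1 then a else ⊥
  v := fun q => if q ≤ 0 then ⊥ else if q ≤ 1 then ac else ⊤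

/-- Iterated sum of a finite list of pairs. -/
noncomputable def sumMP {L : Type*} [Order.Frame L] : List (MP L) → MP L
  | [] => zeroMP L
  | [f] => f
  | f :: g :: fs => f.add (sumMP (g :: fs))

/-! Write `c·1_S` for the function with value `c` on `S` and `⊥` elsewhere. Each component of a sum
of pairs is a sup-convolution; this operation distributes over `⊔`, and
`c·1_S ∗ d·1_T = (c ⊓ d)·1_(S + T)`. The components of `χ_a` are `⊤·1_(-∞,0) ⊔ a·1_(-∞,1)` and
`aᶜ·1_(0,∞) ⊔ ⊤·1_(1,∞)`. In `χ_a + χ_b`, disjointness of `a` and `b` kills the term on `(-∞,2)`,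
and codisjointness of `aᶜ` and `bᶜ` makes the second component equal to `⊤` on `(1,∞)`. -/

open Set
open scoped Function Pointwise

section Order

theorem iSup_fin_succ {α : Type*} [CompleteLattice α] {n : ℕ} (f : Fin (n + 1) → α) :
    ⨆ i, f i = f 0 ⊔ ⨆ i : Fin n, f i.succ :=
  eq_of_forall_ge_iff fun c => by simp only [iSup_le_iff, sup_le_iff, Fin.forall_fin_succ]

theorem iInf_fin_succ {α : Type*} [CompleteLattice α] {n : ℕ} (f : Fin (n + 1) → α) :
    ⨅ i, f i = f 0 ⊓ ⨅ i : Fin n, f i.succ :=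
  iSup_fin_succ (α := αᵒᵈ) f

theorem codisjoint_iInf_iff_of_finite {L ι : Type*} [Order.Frame L] [Finite ι] {b : L}
    {f : ι → L} : Codisjoint b (⨅ i, f i) ↔ ∀ i, Codisjoint b (f i) := by
  have := Fintype.ofFinite ι
  simp only [codisjoint_iff, ← Finset.inf_univ_eq_iInf, Finset.inf_sup_distrib_left,
    Finset.inf_eq_top_iff, Finset.mem_univ, true_imp_iff]

theorem compl_iSup_eq_iInf {L : Type*} {ι : Sort*} [Order.Frame L] {a ac : ι → L}
    (ha : ∀ i, IsCompl (a i) (ac i)) : (⨆ i, a i)ᶜ = ⨅ i, ac i := by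
  rw [← himp_bot, iSup_himp_eq]
  exact iInf_congr fun i => (himp_bot _).trans (ha i).compl_eq

theorem codisjoint_of_disjoint_of_isCompl {α : Type*} [DistribLattice α] [BoundedOrder α]
    {a ac b bc : α} (hab : Disjoint a b) (ha : IsCompl a ac) (hb : IsCompl b bc) :
    Codisjoint ac bc :=
  (ha.codisjoint.mono_left (hb.le_right_iff.2 hab)).symm

end Order

section Intervals

variable {G : Type*} [AddCommGroup G] [LinearOrder G] [IsOrderedAddMonoid G] [DenselyOrdered G]

theorem Iio_add_Iio (x y : G) : Iio x + Iio y = Iio (x + y) := by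
  ext z
  constructor
  · rintro ⟨s, hs, t, ht, rfl⟩
    exact add_lt_add hs ht
  · intro hz
    obtain ⟨t, hzt, htx⟩ := exists_between (sub_lt_iff_lt_add.2 hz)
    exact ⟨t, htx, z - t, sub_lt_comm.1 hzt, add_sub_cancel t z⟩

theorem Ioi_add_Ioi (x y : G) : Ioi x + Ioi y = Ioi (x + y) :=
  Iio_add_Iio (G := Gᵒᵈ) x y

end Intervals

section ValueOn

variable {X L : Type*} [CompleteLattice L]

/-- The function `c·1_S` with value `c` on `S` and `⊥` elsewhere, written as a supremum over proofs
of membership so that the frame distributivity laws apply to it. -/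
def valueOn (S : Set X) (c : L) : X → L := fun x => ⨆ _ : x ∈ S, c

theorem valueOn_bot (S : Set X) : valueOn S (⊥ : L) = ⊥ :=
  funext fun _ => iSup_bot

theorem valueOn_sup (S : Set X) (c d : L) : valueOn S c ⊔ valueOn S d = valueOn S (c ⊔ d) :=
  funext fun _ => iSup_sup_eq.symm

theorem valueOn_mono {S T : Set X} {c d : L} (hST : S ⊆ T) (hcd : c ≤ d) :
    valueOn S c ≤ valueOn T d :=
  fun _ => iSup_mono' fun hx => ⟨hST hx, hcd⟩

end ValueOn

section SupConv

variable {G L : Type*} [Order.Frame L]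

/-- The sup-convolution of two frame-valued functions, the operation underlying both
components of the sum of pairs. -/
def supConv [Sub G] (f g : G → L) : G → L := fun x => ⨆ t, f t ⊓ g (x - t)

theorem supConv_sup_left [Sub G] (f g h : G → L) : supConv (f ⊔ g) h = supConv f h ⊔ supConv g h :=
  funext fun _ => by simp only [supConv, Pi.sup_apply, inf_sup_right, iSup_sup_eq]

theorem supConv_sup_right [Sub G] (f g h : G → L) : supConv f (g ⊔ h) = supConv f g ⊔ supConv f h :=
  funext fun _ => by simp only [supConv, Pi.sup_apply, inf_sup_left, iSup_sup_eq]

theorem supConv_valueOn [AddCommGroup G] (S T : Set G) (c d : L) :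
    supConv (valueOn S c) (valueOn T d) = valueOn (S + T) (c ⊓ d) := by
  funext x
  apply le_antisymm
  · refine iSup_le fun t => ?_
    simp only [valueOn, iSup_inf_eq, inf_iSup_eq, iSup_le_iff]
    exact fun hxt ht => le_iSup_of_le ⟨t, ht, x - t, hxt, add_sub_cancel t x⟩ le_rfl
  · refine iSup_le ?_
    rintro ⟨s, hs, t, ht, rfl⟩
    refine le_iSup_of_le s (inf_le_inf (le_iSup_of_le hs le_rfl) (le_iSup_of_le ?_ le_rfl))
    rwa [add_sub_cancel_left]

end SupConv

section Chi

variable {L : Type*} [Order.Frame L]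

theorem chiMP_u (a ac : L) : (chiMP a ac).u = valueOn (Iio 0) ⊤ ⊔ valueOn (Iio 1) a := by
  funext p
  simp only [chiMP, valueOn, Pi.sup_apply, mem_Iio]
  split_ifs <;> simp [*]

theorem chiMP_v (a ac : L) : (chiMP a ac).v = valueOn (Ioi 0) ac ⊔ valueOn (Ioi 1) ⊤ := by
  funext q
  simp only [chiMP, valueOn, Pi.sup_apply, mem_Ioi, ← not_le]
  split_ifs with h0 h1
  · simp [h0, h0.trans zero_le_one]
  · simp [*]
  · simp [*]

theorem zeroMP_eq_chiMP : zeroMP L = chiMP ⊥ ⊤ := by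
  simp only [zeroMP, chiMP, ite_self]

theorem chiMP_add_chiMP {a ac b bc : L} (hab : Disjoint a b) (hc : Codisjoint ac bc) :
    (chiMP a ac).add (chiMP b bc) = chiMP (a ⊔ b) (ac ⊓ bc) := by
  have hu : supConv (chiMP a ac).u (chiMP b bc).u = (chiMP (a ⊔ b) (ac ⊓ bc)).u := calc
    supConv (chiMP a ac).u (chiMP b bc).u
    _ = valueOn (Iio 0) ⊤ ⊔ valueOn (Iio 1) a ⊔ (valueOn (Iio 1) b ⊔ valueOn (Iio 2) (a ⊓ b)) := by
      simp only [chiMP_u, supConv_sup_left, supConv_sup_right, supConv_valueOn, Iio_add_Iio,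
        zero_add, add_zero, one_add_one_eq_two, top_inf_eq, inf_top_eq]
    _ = valueOn (Iio 0) ⊤ ⊔ valueOn (Iio 1) (a ⊔ b) := by
      rw [hab.eq_bot, valueOn_bot, sup_bot_eq, sup_assoc, valueOn_sup]
    _ = (chiMP (a ⊔ b) (ac ⊓ bc)).u := (chiMP_u _ _).symm
  have hv : supConv (chiMP a ac).v (chiMP b bc).v = (chiMP (a ⊔ b) (ac ⊓ bc)).v := calc
    supConv (chiMP a ac).v (chiMP b bc).v
    _ = valueOn (Ioi 0) (ac ⊓ bc) ⊔ valueOn (Ioi 1) bc ⊔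
        (valueOn (Ioi 1) ac ⊔ valueOn (Ioi 2) ⊤) := by
      simp only [chiMP_v, supConv_sup_left, supConv_sup_right, supConv_valueOn, Ioi_add_Ioi,
        zero_add, add_zero, one_add_one_eq_two, top_inf_eq, inf_top_eq]
    _ = valueOn (Ioi 0) (ac ⊓ bc) ⊔ (valueOn (Ioi 1) ⊤ ⊔ valueOn (Ioi 2) ⊤) := by
      rw [sup_assoc, ← sup_assoc (valueOn _ bc), valueOn_sup, hc.symm.eq_top]
    _ = valueOn (Ioi 0) (ac ⊓ bc) ⊔ valueOn (Ioi 1) ⊤ := by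
      rw [sup_eq_left (a := valueOn (Ioi 1) _).2 (valueOn_mono (Ioi_subset_Ioi one_le_two) le_rfl)]
    _ = (chiMP (a ⊔ b) (ac ⊓ bc)).v := (chiMP_v _ _).symm
  exact congrArg₂ MP.mk hu hv

theorem sumMP_chiMP_cons (a ac : L) (l : List (MP L)) :
    sumMP (chiMP a ac :: l) = (chiMP a ac).add (sumMP l) := by
  cases l with
  | nil =>
    simp only [sumMP, zeroMP_eq_chiMP, chiMP_add_chiMP disjoint_bot_right codisjoint_top_right,
      sup_bot_eq, inf_top_eq]
  | cons f l => rfl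

theorem sum_chi_disjoint_general {k : ℕ} {a ac : Fin k → L} (ha : Pairwise (Disjoint on a))
    (hac : Pairwise (Codisjoint on ac)) :
    sumMP (List.ofFn fun i => chiMP (a i) (ac i)) = chiMP (⨆ i, a i) (⨅ i, ac i) := by
  induction k with
  | zero => simp only [List.ofFn_zero, sumMP, zeroMP_eq_chiMP, iSup_of_empty, iInf_of_empty]
  | succ k ih =>
    have hdisj : Disjoint (a 0) (⨆ i : Fin k, a i.succ) :=
      disjoint_iSup_iff.2 fun i => ha (Fin.succ_ne_zero i).symm
    have hcodisj : Codisjoint (ac 0) (⨅ i : Fin k, ac i.succ) :=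
      codisjoint_iInf_iff_of_finite.2 fun i => hac (Fin.succ_ne_zero i).symm
    rw [List.ofFn_succ, sumMP_chiMP_cons,
      ih (ha.comp_of_injective (Fin.succ_injective k))
        (hac.comp_of_injective (Fin.succ_injective k)),
      chiMP_add_chiMP hdisj hcodisj, ← iSup_fin_succ, ← iInf_fin_succ]

end Chi

/-- For pairwise disjoint complemented elements `a 1, …, a k`,
`χ_{a 1} + ⋯ + χ_{a k} = χ_{a 1 ⊔ ⋯ ⊔ a k}`. -/
theorem sum_chi_disjoint {L : Type*} [Order.Frame L] (k : ℕ) (hk : 0 < k)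
    (a ac : Fin k → L) (ha : ∀ i, IsCompl (a i) (ac i))
    (hdisj : ∀ i j, i ≠ j → a i ⊓ a j = ⊥)
    (s sc : L) (hs : s = ⨆ i, a i) (hsc : IsCompl s sc) :
    sumMP (List.ofFn fun i => chiMP (a i) (ac i)) = chiMP s sc := by
  have hdisjoint : Pairwise (Disjoint on a) := fun i j hij => disjoint_iff.2 (hdisj i j hij)
  have hcodisjoint : Pairwise (Codisjoint on ac) := fun i j hij =>
    codisjoint_of_disjoint_of_isCompl (hdisjoint hij) (ha i) (ha j)
  rw [sum_chi_disjoint_general hdisjoint hcodisjoint, ← compl_iSup_eq_iInf ha, ← hs, hsc.compl_eq]
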